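/- Let M ⊆ ℕ be such that |M ∩ {0,…,n}| / (n+1) → δ as n → ∞, where δ ∈ [0,1], and let F_M := {x ∈ ⟦𝕐⟧ : x(n) = 0 for every n ∉ M}. Then dim_H(F_M) = δ. -/

import Mathlib

open Metric Set Filter MeasureTheory

noncomputable local instance : MetricSpace (ℕ → Bool) := PiNat.metricSpace

open scoped ENNReal NNReal Topology Classical

theorem borelSpace_nat_bool : BorelSpace (ℕ → Bool) :=
  (Pi.borelSpace : @BorelSpace (ℕ → Bool) Pi.topologicalSpace MeasurableSpace.pi)

attribute [local instance] borelSpace_nat_bool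

/-- The number of elements of `M` below `n`. -/
noncomputable def countBelow (M : Set ℕ) (n : ℕ) : ℕ := ((Finset.range n).filter (· ∈ M)).card

theorem ncard_inter_Iic_eq_countBelow (M : Set ℕ) (n : ℕ) :
    (M ∩ Set.Iic n).ncard = countBelow M (n + 1) := by
  rw [countBelow, ← Set.ncard_coe_finset]
  congr 1
  ext i
  simp [and_comm]

theorem tendsto_countBelow_div {M : Set ℕ} {δ : ℝ}
    (hM : Tendsto (fun n : ℕ => ((M ∩ Set.Iic n).ncard : ℝ) / (n + 1)) atTop (nhds δ)) :
    Tendsto (fun n : ℕ => (countBelow M n : ℝ) / n) atTop (𝓝 δ) := by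
  rw [← tendsto_add_atTop_iff_nat 1]
  simpa [ncard_inter_Iic_eq_countBelow] using hM

theorem edist_le_of_mem_cylinder {x y : ℕ → Bool} {n : ℕ} (h : y ∈ PiNat.cylinder x n) :
    edist y x ≤ 2⁻¹ ^ n := by
  have h' : dist y x ≤ (1 / 2) ^ n := PiNat.mem_cylinder_iff_dist_le.1 h
  rw [edist_dist]
  refine (ENNReal.ofReal_le_ofReal h').trans_eq ?_
  rw [ENNReal.ofReal_pow (by norm_num), one_div, ENNReal.ofReal_inv_of_pos (by norm_num)]
  simp

theorem mem_cylinder_of_edist_le {x y : ℕ → Bool} {n : ℕ} (h : edist y x ≤ 2⁻¹ ^ n) :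
    y ∈ PiNat.cylinder x n := by
  refine PiNat.mem_cylinder_iff_dist_le.2 ?_
  change dist y x ≤ (1 / 2) ^ n
  have := ENNReal.toReal_mono (by simp) h
  simpa [edist_dist, ENNReal.toReal_ofReal dist_nonneg] using this

theorem le_edist_of_notMem_cylinder {x y : ℕ → Bool} {n : ℕ}
    (h : y ∉ PiNat.cylinder x (n + 1)) : 2⁻¹ ^ n ≤ edist y x := by
  have hne : y ≠ x := by
    rintro rfl
    exact h (PiNat.self_mem_cylinder _ _)
  have hle : PiNat.firstDiff y x ≤ n := by
    by_contra! hlt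
    exact h ((PiNat.mem_cylinder_iff_le_firstDiff hne _).2 hlt)
  have hd : dist y x = (1 / 2) ^ PiNat.firstDiff y x := PiNat.dist_eq_of_ne hne
  rw [edist_dist, hd, ENNReal.ofReal_pow (by norm_num), one_div,
    ENNReal.ofReal_inv_of_pos (by norm_num)]
  simpa using pow_le_pow_of_le_one (a := (2⁻¹ : ℝ≥0∞)) zero_le (by simp) hle

theorem inv_two_pow_rpow (n : ℕ) (d : ℝ) :
    ((2⁻¹ : ℝ≥0∞) ^ n) ^ d = (2⁻¹ : ℝ≥0∞) ^ (d * n) := by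
  rw [← ENNReal.rpow_natCast, ← ENNReal.rpow_mul, mul_comm]

theorem dimH_le_of_eventually_countBelow_le {M : Set ℕ} {d : ℝ≥0}
    (h : ∀ᶠ n : ℕ in atTop, (countBelow M n : ℝ) ≤ d * n) :
    dimH {x : ℕ → Bool | ∀ n : ℕ, n ∉ M → x n = false} ≤ d := by
  refine dimH_le_of_hausdorffMeasure_ne_top (ne_top_of_le_ne_top ENNReal.one_ne_top ?_)
  let t (n : ℕ) (S : ((Finset.range n).filter (· ∈ M)).powerset) : Set (ℕ → Bool) :=
    PiNat.cylinder (fun i => decide (i ∈ S.1)) n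
  have hdiam (n S) : ediam (t n S) ≤ 2⁻¹ ^ n := by
    refine ediam_le fun x hx y hy => edist_le_of_mem_cylinder ?_
    exact fun i hi => (hx i hi).trans (hy i hi).symm
  refine (Measure.hausdorffMeasure_le_liminf_sum (d : ℝ) _ (fun n : ℕ => (2⁻¹ : ℝ≥0∞) ^ n)
    (ENNReal.tendsto_pow_atTop_nhds_zero_of_lt_one (by simp)) t (.of_forall hdiam)
    (.of_forall fun n x hx => ?_)).trans ?_
  · refine mem_iUnion.2 ⟨⟨(Finset.range n).filter (fun i => x i = true), ?_⟩, fun i hi => ?_⟩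
    · rw [Finset.mem_powerset]
      intro i hi
      simp only [Finset.mem_filter] at hi ⊢
      refine ⟨hi.1, by_contra fun hiM => ?_⟩
      simp [hx i hiM] at hi
    · simp [hi]
  · refine liminf_le_of_frequently_le' (Eventually.frequently ?_)
    filter_upwards [h] with n hn
    calc ∑ S, ediam (t n S) ^ (d : ℝ)
      _ ≤ ∑ _S : ((Finset.range n).filter (· ∈ M)).powerset, (2⁻¹ : ℝ≥0∞) ^ (d * n : ℝ) := by
        gcongr with S
        rw [← inv_two_pow_rpow]
        exact ENNReal.rpow_le_rpow (hdiam n S) d.2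
      _ = 2 ^ countBelow M n * (2⁻¹ : ℝ≥0∞) ^ (d * n : ℝ) := by
        simp [countBelow]
      _ ≤ 2 ^ countBelow M n * (2⁻¹ : ℝ≥0∞) ^ (countBelow M n : ℝ) := by
        gcongr 2 ^ countBelow M n * ?_
        exact ENNReal.rpow_le_rpow_of_exponent_ge (by simp) hn
      _ = 1 := by
        rw [ENNReal.rpow_natCast, ← mul_pow, ENNReal.mul_inv_cancel (by simp) (by simp), one_pow]

/-- The law of the `i`-th coordinate of a random element of `F_M`: a fair bit if `i ∈ M`, and
the constant `false` otherwise. -/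
noncomputable def coordLaw (M : Set ℕ) (i : ℕ) : Measure Bool :=
  if i ∈ M then (PMF.uniformOfFintype Bool).toMeasure else Measure.dirac false

instance (M : Set ℕ) (i : ℕ) : IsProbabilityMeasure (coordLaw M i) := by
  unfold coordLaw
  split_ifs <;> infer_instance

theorem coordLaw_singleton_le (M : Set ℕ) (i : ℕ) (b : Bool) :
    coordLaw M i {b} ≤ if i ∈ M then 2⁻¹ else 1 := by
  split_ifs with hi
  · simp [coordLaw, hi]
  · exact prob_le_one

theorem infinitePi_coordLaw_cylinder_le (M : Set ℕ) (x : ℕ → Bool) (n : ℕ) :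
    Measure.infinitePi (coordLaw M) (PiNat.cylinder x n) ≤ 2⁻¹ ^ countBelow M n := by
  rw [PiNat.cylinder_eq_pi, Measure.infinitePi_pi _ (fun _ _ => measurableSet_singleton _)]
  refine (Finset.prod_le_prod' fun i _ => coordLaw_singleton_le M i (x i)).trans_eq ?_
  rw [Finset.prod_ite]
  simp [countBelow]

theorem infinitePi_coordLaw_apply_eq_one (M : Set ℕ) :
    Measure.infinitePi (coordLaw M) {x : ℕ → Bool | ∀ n : ℕ, n ∉ M → x n = false} = 1 := by
  have hF : {x : ℕ → Bool | ∀ n : ℕ, n ∉ M → x n = false} =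
      Set.univ.pi (fun n => {b | n ∉ M → b = false}) := by
    ext x
    simp
  rw [hF, Measure.infinitePi_pi_univ _ (fun _ => MeasurableSet.of_discrete)]
  refine (tprod_congr fun i => ?_).trans tprod_one
  by_cases hi : i ∈ M
  · simp [hi, -Bool.univ_eq]
  · simp [hi, coordLaw]

theorem le_dimH_of_eventually_le_countBelow {M : Set ℕ} {d : ℝ≥0} (hd : 0 < d)
    (h : ∀ᶠ n : ℕ in atTop, (d * n : ℝ) ≤ countBelow M n) :
    d ≤ dimH {x : ℕ → Bool | ∀ n : ℕ, n ∉ M → x n = false} := by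
  obtain ⟨N, hN⟩ := eventually_atTop.1 h
  set μ := Measure.infinitePi (coordLaw M) with hμ
  have hcyl (x : ℕ → Bool) (n : ℕ) (hn : N ≤ n) :
      μ (PiNat.cylinder x n) ≤ ((2⁻¹ : ℝ≥0∞) ^ n) ^ (d : ℝ) := by
    refine (infinitePi_coordLaw_cylinder_le M x n).trans ?_
    rw [inv_two_pow_rpow, ← ENNReal.rpow_natCast]
    exact ENNReal.rpow_le_rpow_of_exponent_ge (by simp) (hN n hn)
  have hle : μ ≤ Measure.hausdorffMeasure (d : ℝ) := by
    refine Measure.le_hausdorffMeasure _ μ (2⁻¹ ^ N) (ENNReal.pow_pos (by simp) N) fun s hs => ?_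
    rcases s.eq_empty_or_nonempty with rfl | ⟨x, hx⟩
    · simp
    have hsN : s ⊆ PiNat.cylinder x N := fun y hy =>
      mem_cylinder_of_edist_le ((edist_le_ediam_of_mem hy hx).trans hs)
    by_cases hall : ∀ n ≥ N, s ⊆ PiNat.cylinder x n
    · have hlim : Tendsto (fun n : ℕ => ((2⁻¹ : ℝ≥0∞) ^ n) ^ (d : ℝ)) atTop (𝓝 0) := by
        have := (ENNReal.tendsto_pow_atTop_nhds_zero_of_lt_one
          (r := 2⁻¹) (by simp)).ennrpow_const (d : ℝ)
        rwa [ENNReal.zero_rpow_of_pos (by exact_mod_cast hd)] at this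
      have hzero : μ s ≤ 0 := ge_of_tendsto hlim <| by
        filter_upwards [eventually_ge_atTop N] with n hn
        exact (measure_mono (hall n hn)).trans (hcyl x n hn)
      exact hzero.trans zero_le
    · have hex : ∃ n, N ≤ n ∧ s ⊆ PiNat.cylinder x n ∧ ¬ s ⊆ PiNat.cylinder x (n + 1) := by
        by_contra! hstep
        exact hall fun n hn => Nat.le_induction hsN (fun k hk ih => hstep k hk ih) n hn
      obtain ⟨n, hn, hsub, hnot⟩ := hex
      obtain ⟨y, hy, hyx⟩ := not_subset.1 hnot
      refine ((measure_mono hsub).trans (hcyl x n hn)).trans (ENNReal.rpow_le_rpow ?_ d.2)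
      exact (le_edist_of_notMem_cylinder hyx).trans (edist_le_ediam_of_mem hy hx)
  refine le_dimH_of_hausdorffMeasure_ne_zero (ne_of_gt (lt_of_lt_of_le ?_ (hle _)))
  rw [hμ, infinitePi_coordLaw_apply_eq_one]
  exact zero_lt_one

/-- If `M ⊆ ℕ` has density `δ ∈ [0,1]`, then the set `F_M` of binary sequences vanishing
outside `M` has Hausdorff dimension `δ`. -/
theorem dimH_FM (M : Set ℕ) (δ : ℝ) (hδ : δ ∈ Set.Icc (0 : ℝ) 1)
    (hM : Tendsto (fun n : ℕ => ((M ∩ Set.Iic n).ncard : ℝ) / (n + 1)) atTop (nhds δ)) :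
    dimH {x : ℕ → Bool | ∀ n : ℕ, n ∉ M → x n = false} = ENNReal.ofReal δ := by
  have hlim := tendsto_countBelow_div hM
  apply le_antisymm
  · refine le_of_forall_gt_imp_ge_of_dense fun c hc => ?_
    obtain ⟨d, hδd, hdc⟩ := ENNReal.lt_iff_exists_nnreal_btwn.1 hc
    refine (dimH_le_of_eventually_countBelow_le ?_).trans hdc.le
    have hd : δ < d := by
      rwa [ENNReal.ofReal_lt_coe_iff hδ.1] at hδd
    filter_upwards [hlim.eventually_lt_const hd, eventually_gt_atTop 0] with n hn hpos
    exact ((div_lt_iff₀ (by exact_mod_cast hpos)).1 hn).le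
  · refine le_of_forall_lt_imp_le_of_dense fun c hc => ?_
    lift c to ℝ≥0 using hc.ne_top
    rcases eq_zero_or_pos c with rfl | hc0
    · simp
    refine le_dimH_of_eventually_le_countBelow hc0 ?_
    have hd : (c : ℝ) < δ := by
      simpa using (ENNReal.lt_ofReal_iff_toReal_lt ENNReal.coe_ne_top).1 hc
    filter_upwards [hlim.eventually_const_lt hd, eventually_gt_atTop 0] with n hn hpos
    exact ((lt_div_iff₀ (by exact_mod_cast hpos)).1 hn).le
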